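/- arXiv:1005.5247 — 2 statements merged into one kernel-verified Lean document; each statement's English description precedes it below -/
import Mathlib

section
/- Let d ≥ 1, C > 0, and let f : ℝ × ℝ^d → ℝ be continuous and satisfy |f(y,z)| ≤ C(1 + |y| + ‖z‖) for all (y,z). If (y_n, z_n) is a sequence in ℝ × ℝ^d converging to (y,z), then the diagonal sequence of inf-convolutions f_n(y_n, z_n) converges to f(y,z) as n → ∞. -/
open Filter Topology

/-- Inf-convolution: `f_n(y,z) = inf_{(u,v)} { f(u,v) + n(|y-u| + ‖z-v‖) }`. -/
noncomputable def infConv (d : ℕ) (f : ℝ × EuclideanSpace ℝ (Fin d) → ℝ) (n : ℕ)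
    (y : ℝ) (z : EuclideanSpace ℝ (Fin d)) : ℝ :=
  sInf {r : ℝ | ∃ u v, r = f (u, v) + (n : ℝ) * (|y - u| + ‖z - v‖)}

theorem stmt4 (d : ℕ) (hd : 1 ≤ d) (C : ℝ) (hC : 0 < C)
    (f : ℝ × EuclideanSpace ℝ (Fin d) → ℝ) (hf : Continuous f)
    (hgrowth : ∀ (y : ℝ) (z : EuclideanSpace ℝ (Fin d)), |f (y, z)| ≤ C * (1 + |y| + ‖z‖))
    (yseq : ℕ → ℝ) (zseq : ℕ → EuclideanSpace ℝ (Fin d))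
    (y : ℝ) (z : EuclideanSpace ℝ (Fin d))
    (hconv : Tendsto (fun n => (yseq n, zseq n)) atTop (𝓝 (y, z))) :
    Tendsto (fun n => infConv d f n (yseq n) (zseq n)) atTop (𝓝 (f (y, z))) := by
  rw [Metric.tendsto_atTop]
  intro ε hε
  obtain ⟨δ, hδ, hcont⟩ := Metric.continuous_iff.1 hf (y, z) (ε / 2) (by positivity)
  obtain ⟨N₁, hN₁⟩ := Metric.tendsto_atTop.1 hconv (δ / 2) (by positivity)
  obtain ⟨N₂, hN₂⟩ := exists_nat_ge
    (C + (|f (y, z)| + C * (1 + |y| + ‖z‖ + δ)) / (δ / 2))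
  refine ⟨max N₁ N₂, fun n hn => ?_⟩
  have hn1 := hN₁ n (le_trans (le_max_left _ _) hn)
  have hn2 : C + (|f (y, z)| + C * (1 + |y| + ‖z‖ + δ)) / (δ / 2) ≤ (n : ℝ) :=
    hN₂.trans (by exact_mod_cast le_trans (le_max_right _ _) hn)
  have hfn := hcont _ (hn1.trans (by linarith))
  rw [Prod.dist_eq, max_lt_iff] at hn1
  obtain ⟨hy, hz⟩ := hn1
  simp only [Real.dist_eq] at hy
  simp only [dist_eq_norm] at hz
  rw [Real.dist_eq, abs_lt] at hfn
  have hlow : ∀ u v, f (y, z) - ε / 2 ≤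
      f (u, v) + (n : ℝ) * (|yseq n - u| + ‖zseq n - v‖) := by
    intro u v
    have h1 : |u - y| ≤ |yseq n - u| + |yseq n - y| := by
      have := abs_sub_le u (yseq n) y
      rwa [abs_sub_comm u (yseq n)] at this
    have h2 : ‖v - z‖ ≤ ‖zseq n - v‖ + ‖zseq n - z‖ := by
      have := norm_sub_le_norm_sub_add_norm_sub v (zseq n) z
      rwa [norm_sub_rev v (zseq n)] at this
    have p1 := abs_nonneg (yseq n - u)
    have p2 := norm_nonneg (zseq n - v)
    by_cases hs : |yseq n - u| + ‖zseq n - v‖ < δ / 2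
    · have h3 : dist (u, v) (y, z) < δ := by
        rw [Prod.dist_eq, max_lt_iff]
        simp only [dist_eq_norm, Real.norm_eq_abs]
        constructor <;> linarith
      have h4 := hcont _ h3
      rw [Real.dist_eq, abs_lt] at h4
      have : 0 ≤ (n : ℝ) * (|yseq n - u| + ‖zseq n - v‖) := by positivity
      linarith
    · push Not at hs
      have h5 : |u| ≤ |u - y| + |y| := by
        have := abs_add_le (u - y) y
        simpa using this
      have h6 : ‖v‖ ≤ ‖v - z‖ + ‖z‖ := by
        have := norm_add_le (v - z) z
        simpa using this
      have h7 := (abs_le.1 (hgrowth u v)).1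
      have h8 : C * (1 + |u| + ‖v‖) ≤
          C * (1 + |y| + ‖z‖ + δ + (|yseq n - u| + ‖zseq n - v‖)) :=
        mul_le_mul_of_nonneg_left (by linarith) hC.le
      have h9 : (|f (y, z)| + C * (1 + |y| + ‖z‖ + δ)) ≤ ((n : ℝ) - C) * (δ / 2) :=
        (div_le_iff₀ (by positivity)).1 (by linarith)
      have h10 : 0 ≤ (n : ℝ) - C := by
        have : 0 ≤ (|f (y, z)| + C * (1 + |y| + ‖z‖ + δ)) / (δ / 2) := by positivity
        linarith
      have h11 := mul_le_mul_of_nonneg_left hs h10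
      have h12 := le_abs_self (f (y, z))
      linarith
  have hge : f (y, z) - ε / 2 ≤ infConv d f n (yseq n) (zseq n) := by
    refine le_csInf ⟨_, 0, 0, rfl⟩ ?_
    rintro r ⟨u, v, rfl⟩
    exact hlow u v
  have hle : infConv d f n (yseq n) (zseq n) ≤ f (yseq n, zseq n) := by
    refine csInf_le ⟨f (y, z) - ε / 2, ?_⟩ ⟨yseq n, zseq n, by simp⟩
    rintro r ⟨u, v, rfl⟩
    exact hlow u v
  rw [Real.dist_eq, abs_lt]
  constructor <;> linarith
end

section
/- Let T > 0 and let c ∈ [0,T]. Define y : [0,T] → ℝ by y(t) = (max(c² − t², 0))². Then y is a solution of the integral equation y(t) = ∫_t^T 4s·√(y(s)) ds for all t ∈ [0,T]; equivalently, for all t ∈ [0,T], ∫_t^T 4s·max(c² − s², 0) ds = (max(c² − t², 0))². -/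
theorem stmt11 (T : ℝ) (hT : 0 < T) (c : ℝ) (hc : c ∈ Set.Icc 0 T)
    (y : ℝ → ℝ) (hy : ∀ t, y t = (max (c ^ 2 - t ^ 2) 0) ^ 2) :
    ∀ t ∈ Set.Icc 0 T,
      y t = ∫ s in t..T, 4 * s * Real.sqrt (y s) := by
  intro t ht
  obtain ⟨hc0, hcT⟩ := hc
  obtain ⟨ht0, htT⟩ := ht
  have hs : ∀ s, Real.sqrt (y s) = max (c ^ 2 - s ^ 2) 0 := fun s => by
    rw [hy, Real.sqrt_sq (le_max_right _ _)]
  simp only [hs]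
  rw [hy t]
  have hcont : Continuous fun s : ℝ => 4 * s * max (c ^ 2 - s ^ 2) 0 := by fun_prop
  have hzero : ∀ a, c ≤ a → a ≤ T → ∫ s in a..T, 4 * s * max (c ^ 2 - s ^ 2) 0 = 0 := by
    intro a ha haT
    have : ∫ s in a..T, 4 * s * max (c ^ 2 - s ^ 2) 0 = ∫ s in a..T, (0 : ℝ) := by
      apply intervalIntegral.integral_congr
      intro s h
      rw [Set.uIcc_of_le haT] at h
      have : c ^ 2 - s ^ 2 ≤ 0 := by nlinarith [h.1]
      simp [max_eq_right this]
    simpa using this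
  rcases le_total c t with h | h
  · rw [hzero t h htT, max_eq_right (by nlinarith)]
    norm_num
  · rw [← intervalIntegral.integral_add_adjacent_intervals (b := c)
      (hcont.intervalIntegrable _ _) (hcont.intervalIntegrable _ _), hzero c le_rfl hcT]
    have h1 : ∫ s in t..c, 4 * s * max (c ^ 2 - s ^ 2) 0
        = ∫ s in t..c, 4 * s * (c ^ 2 - s ^ 2) := by
      apply intervalIntegral.integral_congr
      intro s h'
      rw [Set.uIcc_of_le h] at h'
      have : 0 ≤ c ^ 2 - s ^ 2 := by nlinarith [h'.1, h'.2]
      simp [max_eq_left this]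
    have h2 : ∫ s in t..c, 4 * s * (c ^ 2 - s ^ 2)
        = -(c ^ 2 - c ^ 2) ^ 2 - -(c ^ 2 - t ^ 2) ^ 2 := by
      apply intervalIntegral.integral_eq_sub_of_hasDerivAt
        (f := fun s : ℝ => -(c ^ 2 - s ^ 2) ^ 2)
      · intro s _
        have := ((((hasDerivAt_id s).pow 2).const_sub (c ^ 2)).pow 2).neg
        convert this using 1
        · rfl
        · simp
          ring
      · exact Continuous.intervalIntegrable (by fun_prop) _ _
    rw [h1, h2, max_eq_left (by nlinarith)]
    ring
end
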